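/- The function a: ℝ⁸ → ℂ defined below is a Schwartz function and is a +1-eigenfunction of the Fourier transform: â(x) = a(x) for all x ∈ ℝ⁸. -/

import Mathlib

open MeasureTheory FourierTransform

/-- Weight 2 Eisenstein series (quasimodular), via its `q`-expansion. -/
noncomputable def E2 (z : ℂ) : ℂ :=
  1 - 24 * ∑' n : ℕ+, ((ArithmeticFunction.sigma 1 n : ℕ) : ℂ) *
    Complex.exp (2 * (Real.pi : ℂ) * Complex.I * n * z)

/-- Weight 4 Eisenstein series, via its `q`-expansion. -/
noncomputable def E4 (z : ℂ) : ℂ :=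
  1 + 240 * ∑' n : ℕ+, ((ArithmeticFunction.sigma 3 n : ℕ) : ℂ) *
    Complex.exp (2 * (Real.pi : ℂ) * Complex.I * n * z)

/-- Weight 6 Eisenstein series, via its `q`-expansion. -/
noncomputable def E6 (z : ℂ) : ℂ :=
  1 - 504 * ∑' n : ℕ+, ((ArithmeticFunction.sigma 5 n : ℕ) : ℂ) *
    Complex.exp (2 * (Real.pi : ℂ) * Complex.I * n * z)

/-- The elliptic `j`-invariant. -/
noncomputable def jInv (z : ℂ) : ℂ := 1728 * E4 z ^ 3 / (E4 z ^ 3 - E6 z ^ 2)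

/-- The weakly holomorphic modular form `varphi_{-2}`. -/
noncomputable def varphim2 (z : ℂ) : ℂ := -1728 * E4 z * E6 z / (E4 z ^ 3 - E6 z ^ 2)

/-- The weakly holomorphic modular form `varphi_{-4}`. -/
noncomputable def varphim4 (z : ℂ) : ℂ := 1728 * E4 z ^ 2 / (E4 z ^ 3 - E6 z ^ 2)

/-- `φ_{-4} = varphi_{-4}`. -/
noncomputable def phim4 (z : ℂ) : ℂ := varphim4 z

/-- `φ_{-2} = varphi_{-4}·E2 + varphi_{-2}`. -/
noncomputable def phim2 (z : ℂ) : ℂ := varphim4 z * E2 z + varphim2 z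

/-- `φ_0 = varphi_{-4}·E2² + 2·varphi_{-2}·E2 + j − 1728`. -/
noncomputable def phi0 (z : ℂ) : ℂ :=
  varphim4 z * E2 z ^ 2 + 2 * varphim2 z * E2 z + jInv z - 1728
/-- Contour integral of `F` along the straight-line segment from `z₁` to `z₂`. -/
noncomputable def segInt (z₁ z₂ : ℂ) (F : ℂ → ℂ) : ℂ :=
  (z₂ - z₁) * ∫ t in (0:ℝ)..1, F (z₁ + (t : ℂ) * (z₂ - z₁))

/-- Contour integral of `F` along the vertical ray from `c·i` to `i∞`. -/
noncomputable def rayIntFrom (c : ℝ) (F : ℂ → ℂ) : ℂ :=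
  Complex.I * ∫ t in Set.Ioi c, F (Complex.I * (t : ℂ))
/-- The radial profile of the `+1`-eigenfunction `a`: the value of `a` on vectors of norm `r`. -/
noncomputable def aRad (r : ℝ) : ℂ :=
  segInt (-1) Complex.I
      (fun z => phi0 (-1/(z+1)) * (z+1)^2 * Complex.exp ((Real.pi:ℂ) * Complex.I * (r:ℂ)^2 * z))
    + segInt 1 Complex.I
      (fun z => phi0 (-1/(z-1)) * (z-1)^2 * Complex.exp ((Real.pi:ℂ) * Complex.I * (r:ℂ)^2 * z))
    - 2 * segInt 0 Complex.I
      (fun z => phi0 (-1/z) * z^2 * Complex.exp ((Real.pi:ℂ) * Complex.I * (r:ℂ)^2 * z))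
    + 2 * rayIntFrom 1 (fun z => phi0 z * Complex.exp ((Real.pi:ℂ) * Complex.I * (r:ℂ)^2 * z))

/-- The radial function `a : ℝ⁸ → ℂ`. -/
noncomputable def aFn (x : EuclideanSpace ℝ (Fin 8)) : ℂ := aRad ‖x‖

namespace Viaz
open UpperHalfPlane Filter Asymptotics Topology

lemma E2_eq (z : ℍ) : E2 z = EisensteinSeries.E2 z := by
  rw [EisensteinSeries.E2_eq_tsum_cexp, E2]
  congr 2
  refine tsum_congr fun n => ?_
  rw [← Complex.exp_nat_mul]
  congr 2
  ring

lemma bern4 : bernoulli 4 = -1/30 := by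
  rw [bernoulli_eq_bernoulli'_of_ne_one (by norm_num), bernoulli'_four]
lemma E4_eq (z : ℍ) : E4 z = ModularForm.E₄ z := by
  have := EisensteinSeries.q_expansion_bernoulli (k := 4) (by norm_num) (by decide) z
  rw [ModularForm.E₄, this, E4, bern4]
  have : ∀ S : ℂ, 1 - (2 * ((4:ℕ):ℂ) / (((-1/30 : ℚ)) : ℂ)) * S = 1 + 240 * S := by
    intro S; push_cast; ring
  rw [this]
  congr 2
  refine tsum_congr fun n => ?_
  rw [zpow_natCast, ← Complex.exp_nat_mul]
  congr 2
  ring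

lemma bern6 : bernoulli 6 = 1/42 := by
  rw [bernoulli_eq_bernoulli'_of_ne_one (by norm_num), bernoulli'_def]
  simp [Finset.sum_range_succ, Nat.choose]
  norm_num [bernoulli'_def 5, Finset.sum_range_succ, Nat.choose]
lemma E6_eq (z : ℍ) : E6 z = ModularForm.E₆ z := by
  have := EisensteinSeries.q_expansion_bernoulli (k := 6) (by norm_num) (by decide) z
  rw [ModularForm.E₆, this, E6, bern6]
  have : ∀ S : ℂ, 1 - (2 * ((6:ℕ):ℂ) / (((1/42 : ℚ)) : ℂ)) * S = 1 - 504 * S := by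
    intro S; push_cast; ring
  rw [this]
  congr 2
  refine tsum_congr fun n => ?_
  rw [zpow_natCast, ← Complex.exp_nat_mul]
  congr 2
  ring

lemma disc_eq (z : ℍ) : E4 z ^ 3 - E6 z ^ 2 = 1728 * ModularForm.discriminant z := by
  rw [ModularForm.discriminant_eq_E₄_cube_sub_E₆_sq, E4_eq, E6_eq]; ring

lemma disc_ne {z : ℂ} (hz : 0 < z.im) : E4 z ^ 3 - E6 z ^ 2 ≠ 0 := by
  have := disc_eq ⟨z, hz⟩
  simp only at this
  rw [this]
  exact mul_ne_zero (by norm_num) (ModularForm.discriminant_ne_zero _)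

lemma phi0_eq {z : ℂ} (hz : 0 < z.im) :
    phi0 z = 1728 * (E2 z * E4 z - E6 z) ^ 2 / (E4 z ^ 3 - E6 z ^ 2) := by
  have := disc_ne hz
  rw [phi0, varphim4, varphim2, jInv]
  field_simp
  ring

lemma diffOn_of {f : ℂ → ℂ} {g : ℍ → ℂ} (h : ∀ z : ℍ, f z = g z)
    (hg : MDifferentiable (modelWithCornersSelf ℂ ℂ) (modelWithCornersSelf ℂ ℂ) g) :
    DifferentiableOn ℂ f {z | 0 < z.im} := by
  rw [UpperHalfPlane.mdifferentiable_iff] at hg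
  refine hg.congr fun z hz => ?_
  have := h ⟨z, hz⟩
  simp only at this
  simp [ofComplex_apply_of_im_pos hz, this]

lemma phi0_diffOn : DifferentiableOn ℂ phi0 {z | 0 < z.im} := by
  have h2 := diffOn_of E2_eq E2_mdifferentiable
  have h4 := diffOn_of E4_eq ModularForm.E₄.holo'
  have h6 := diffOn_of E6_eq ModularForm.E₆.holo'
  have : DifferentiableOn ℂ
      (fun z => 1728 * (E2 z * E4 z - E6 z) ^ 2 / (E4 z ^ 3 - E6 z ^ 2)) {z | 0 < z.im} := by
    refine DifferentiableOn.div ?_ ?_ fun z hz => disc_ne hz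
    · exact (((h2.mul h4).sub h6).pow 2).const_mul _
    · exact (h4.pow 3).sub (h6.pow 2)
  exact this.congr fun z hz => phi0_eq hz

lemma exp_per (n : ℕ+) (z : ℂ) :
    Complex.exp (2 * (Real.pi : ℂ) * Complex.I * n * (z + 1)) =
    Complex.exp (2 * (Real.pi : ℂ) * Complex.I * n * z) := by
  rw [Complex.exp_eq_exp_iff_exists_int]
  exact ⟨n, by push_cast; ring⟩

lemma phi0_periodic (z : ℂ) : phi0 (z + 1) = phi0 z := by
  simp only [phi0, varphim4, varphim2, jInv, E2, E4, E6, exp_per]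

lemma phi0_int (z : ℂ) (n : ℤ) : phi0 (z + n) = phi0 z := by
  have : Function.Periodic phi0 1 := phi0_periodic
  simpa using this.int_mul n z

lemma sum_bound (k : ℕ) : ∃ C : ℝ, 0 ≤ C ∧ ∀ z : ℂ, 1/2 ≤ z.im →
    ‖∑' n : ℕ+, ((ArithmeticFunction.sigma k n : ℕ) : ℂ) *
    Complex.exp (2 * (Real.pi : ℂ) * Complex.I * n * z)‖ ≤ C * Real.exp (-2 * Real.pi * z.im) := by
  set w : ℂ := Complex.I / 2
  have hw : 0 < w.im := by simp [w]
  have hs := EisensteinSeries.summable_sigma_mul_cexp_pow (k := k+1) (by omega) ⟨w, hw⟩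
  have hs' : Summable fun n : ℕ+ => (ArithmeticFunction.sigma k n : ℝ) * Real.exp (-Real.pi) ^ (n:ℕ) := by
    have h1 := hs.norm.comp_injective PNat.coe_injective
    refine h1.congr fun n => ?_
    simp only [Function.comp, norm_mul, norm_pow, Complex.norm_exp, Complex.norm_natCast]
    simp [w]
    congr 2
    ring_nf
  refine ⟨∑' n : ℕ+, Real.exp Real.pi * ((ArithmeticFunction.sigma k n : ℝ) * Real.exp (-Real.pi) ^ (n:ℕ)), tsum_nonneg fun n => by positivity, fun z hz => ?_⟩
  rw [← tsum_mul_right]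
  refine tsum_of_norm_bounded ((hs'.mul_left _).mul_right _).hasSum fun n => ?_
  rw [norm_mul, Complex.norm_exp, Complex.norm_natCast]
  have h1 : (2 * (Real.pi : ℂ) * Complex.I * n * z).re = -2 * Real.pi * n * z.im := by
    simp
  rw [h1, ← Real.exp_nat_mul]
  rw [mul_left_comm (Real.exp Real.pi), ← Real.exp_add, mul_assoc _ (Real.exp _), ← Real.exp_add]
  gcongr
  have hn : (1:ℝ) ≤ ((n:ℕ):ℝ) := by exact_mod_cast n.2
  have := Real.pi_pos
  nlinarith [mul_nonneg (mul_nonneg this.le (sub_nonneg.2 hn)) (sub_nonneg.2 hz)]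

lemma num_bound : ∃ C : ℝ, 0 ≤ C ∧ ∀ z : ℂ, 1/2 ≤ z.im →
    ‖E2 z * E4 z - E6 z‖ ≤ C * Real.exp (-2 * Real.pi * z.im) := by
  obtain ⟨a, ha, h2⟩ := sum_bound 1
  obtain ⟨b, hb, h4⟩ := sum_bound 3
  obtain ⟨c, hc, h6⟩ := sum_bound 5
  refine ⟨24 * a + 240 * b + 24 * 240 * a * b + 504 * c, by positivity, fun z hz => ?_⟩
  specialize h2 z hz
  specialize h4 z hz
  specialize h6 z hz
  rw [E2, E4, E6]
  set A := ∑' n : ℕ+, ((ArithmeticFunction.sigma 1 n : ℕ) : ℂ) *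
    Complex.exp (2 * (Real.pi : ℂ) * Complex.I * n * z)
  set B := ∑' n : ℕ+, ((ArithmeticFunction.sigma 3 n : ℕ) : ℂ) *
    Complex.exp (2 * (Real.pi : ℂ) * Complex.I * n * z)
  set D := ∑' n : ℕ+, ((ArithmeticFunction.sigma 5 n : ℕ) : ℂ) *
    Complex.exp (2 * (Real.pi : ℂ) * Complex.I * n * z)
  set q := Real.exp (-2 * Real.pi * z.im)
  have hq : 0 ≤ q := (Real.exp_pos _).le
  have hq1 : q ≤ 1 := Real.exp_le_one_iff.2 (by nlinarith [Real.pi_pos])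
  have e : (1 - 24 * A) * (1 + 240 * B) - (1 - 504 * D) =
    (-24) * A + 240 * B + (-(24 * 240)) * (A * B) + 504 * D := by ring
  rw [e]
  calc _ ≤ ‖(-24:ℂ) * A‖ + ‖(240:ℂ) * B‖ + ‖(-(24*240):ℂ) * (A * B)‖ + ‖(504:ℂ) * D‖ := by
        refine (norm_add_le _ _).trans ?_
        gcongr
        refine (norm_add_le _ _).trans ?_
        gcongr
        exact norm_add_le _ _
    _ = 24 * ‖A‖ + 240 * ‖B‖ + 24 * 240 * (‖A‖ * ‖B‖) + 504 * ‖D‖ := by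
        simp only [norm_mul, norm_neg]; norm_num
    _ ≤ 24 * (a*q) + 240 * (b*q) + 24 * 240 * ((a*q) * (b*1)) + 504 * (c*q) := by
        gcongr
        exact h4.trans (by gcongr)
    _ = _ := by ring

lemma phi0_decay : ∃ C : ℝ, 0 ≤ C ∧ ∀ z : ℂ, 1/2 ≤ z.im →
    ‖phi0 z‖ ≤ C * Real.exp (-2 * Real.pi * z.im) := by
  obtain ⟨c, hc, hnum⟩ := num_bound
  have hd := ModularForm.exp_isBigO_discriminant
  rw [isBigO_iff'] at hd
  obtain ⟨d, hd0, hd⟩ := hd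
  rw [atImInfty, eventually_comap, eventually_atTop] at hd
  obtain ⟨Y, hd⟩ := hd
  -- compact region
  have hcont : ContinuousOn phi0 (Set.Icc 0 1 ×ℂ Set.Icc (1/2) (max Y 1)) :=
    phi0_diffOn.continuousOn.mono fun z hz => by
      have := hz.2.1
      simp only [Set.mem_ofPred_eq]; linarith
  obtain ⟨M, hM⟩ := (isCompact_Icc.reProdIm isCompact_Icc).exists_bound_of_continuousOn hcont
  have hM0 : 0 ≤ max M 0 := le_max_right _ _
  refine ⟨c^2 * d + max M 0 * Real.exp (2 * Real.pi * max Y 1), by positivity, fun z hz => ?_⟩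
  rw [add_mul]
  rcases le_or_gt z.im (max Y 1) with h | h
  · have e := phi0_int z (-⌊z.re⌋)
    rw [← e]
    refine (hM _ ⟨?_, ?_⟩).trans ?_
    · simp
      have := Int.floor_le z.re
      have := Int.lt_floor_add_one z.re
      constructor <;> linarith
    · simp; constructor
      · norm_num at hz; linarith
      · simpa using h
    · refine le_add_of_nonneg_of_le (by positivity) ?_
      rw [mul_assoc, ← Real.exp_add]
      refine (le_max_left M 0).trans ?_
      refine le_mul_of_one_le_right hM0 (Real.one_le_exp ?_)
      have := Real.pi_pos
      nlinarith
  · have hz0 : 0 < z.im := by linarith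
    refine le_add_of_le_of_nonneg ?_ (by positivity)
    rw [phi0_eq hz0]
    have h1 := disc_eq ⟨z, hz0⟩
    simp only at h1
    have h2 := hd z.im ((le_max_left _ _).trans h.le) ⟨z, hz0⟩ rfl
    have h3 := hnum z hz
    have h4 := ModularForm.discriminant_ne_zero ⟨z, hz0⟩
    rw [h1]
    set D := ModularForm.discriminant ⟨z, hz0⟩
    change ‖Real.exp (-2 * Real.pi * z.im)‖ ≤ _ at h2
    rw [Real.norm_of_nonneg (Real.exp_pos _).le] at h2
    set q := Real.exp (-2 * Real.pi * z.im)
    have hq : 0 < q := Real.exp_pos _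
    rw [mul_div_mul_left _ _ (by norm_num), norm_div, norm_pow, div_le_iff₀ (norm_pos_iff.2 h4)]
    calc _ ≤ (c * q)^2 := by gcongr
      _ = c^2 * q * q := by ring
      _ ≤ c^2 * q * (d * ‖D‖) := by gcongr
      _ = _ := by ring

end Viaz

namespace Viaz
open Filter Topology

structure Good (μ : Measure ℝ) (h z : ℝ → ℂ) : Prop where
  hm : AEStronglyMeasurable h μ
  zc : Continuous z
  pos : ∀ᵐ t ∂μ, 0 < (z t).im
  int : ∀ n k : ℕ, Integrable (fun t => ‖h t‖ * ‖z t‖ ^ n * ((z t).im⁻¹) ^ k *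
    Real.exp (Real.pi * (z t).im)) μ

noncomputable def FF (μ : Measure ℝ) (h z : ℝ → ℂ) (n : ℕ) (ρ : ℝ) : ℂ :=
  ∫ t, h t * ((Real.pi : ℂ) * Complex.I * z t) ^ n *
    Complex.exp ((Real.pi : ℂ) * Complex.I * ρ * z t) ∂μ

lemma norm_pii (w : ℂ) : ‖(Real.pi : ℂ) * Complex.I * w‖ = Real.pi * ‖w‖ := by
  simp [abs_of_pos Real.pi_pos]

lemma norm_cexp (ρ : ℝ) (w : ℂ) : ‖Complex.exp ((Real.pi : ℂ) * Complex.I * ρ * w)‖ =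
    Real.exp (-(Real.pi * ρ * w.im)) := by
  rw [Complex.norm_exp]; simp

variable {μ : Measure ℝ} {h z : ℝ → ℂ}

lemma Good.meas (g : Good μ h z) (n : ℕ) (ρ : ℝ) : AEStronglyMeasurable
    (fun t => h t * ((Real.pi : ℂ) * Complex.I * z t) ^ n *
    Complex.exp ((Real.pi : ℂ) * Complex.I * ρ * z t)) μ := by
  have := g.zc
  refine (g.hm.mul ?_).mul ?_
  · exact Continuous.aestronglyMeasurable (by fun_prop)
  · exact Continuous.aestronglyMeasurable (by fun_prop)

lemma Good.bound (g : Good μ h z) (n : ℕ) : ∀ᵐ t ∂μ, ∀ ρ ∈ Set.Ioi (-1:ℝ),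
    ‖h t * ((Real.pi : ℂ) * Complex.I * z t) ^ n *
    Complex.exp ((Real.pi : ℂ) * Complex.I * ρ * z t)‖ ≤
    Real.pi ^ n * (‖h t‖ * ‖z t‖ ^ n * ((z t).im⁻¹) ^ 0 *
    Real.exp (Real.pi * (z t).im)) := by
  filter_upwards [g.pos] with t ht ρ hρ
  rw [norm_mul, norm_mul, norm_pow, norm_pii, norm_cexp, pow_zero, mul_one, mul_pow]
  have : Real.exp (-(Real.pi * ρ * (z t).im)) ≤ Real.exp (Real.pi * (z t).im) := by
    gcongr
    have : 0 < Real.pi * (z t).im := mul_pos Real.pi_pos ht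
    simp only [Set.mem_Ioi] at hρ
    nlinarith
  calc _ ≤ ‖h t‖ * (Real.pi ^ n * ‖z t‖ ^ n) * Real.exp (Real.pi * (z t).im) := by gcongr
    _ = _ := by ring

lemma Good.integrable (g : Good μ h z) (n : ℕ) {ρ : ℝ} (hρ : -1 < ρ) : Integrable
    (fun t => h t * ((Real.pi : ℂ) * Complex.I * z t) ^ n *
    Complex.exp ((Real.pi : ℂ) * Complex.I * ρ * z t)) μ :=
  ((g.int n 0).const_mul _).mono' (g.meas n ρ) ((g.bound n).mono fun t ht => ht ρ hρ)

lemma Good.hasDerivAt (g : Good μ h z) (n : ℕ) {ρ : ℝ} (hρ : -1 < ρ) :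
    HasDerivAt (FF μ h z n) (FF μ h z (n+1) ρ) ρ := by
  refine (hasDerivAt_integral_of_dominated_loc_of_deriv_le (Ioi_mem_nhds hρ)
    (Eventually.of_forall fun x => g.meas n x) (g.integrable n hρ) (g.meas (n+1) ρ)
    (g.bound (n+1)) ((g.int (n+1) 0).const_mul _) (Eventually.of_forall fun t x _ => ?_)).2
  have h1 : HasDerivAt (fun x : ℝ => (Real.pi : ℂ) * Complex.I * x * z t)
      ((Real.pi : ℂ) * Complex.I * 1 * z t) x :=
    ((Complex.ofRealCLM.hasDerivAt (x := x)).const_mul _).mul_const _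
  have := (h1.cexp).const_mul (h t * ((Real.pi : ℂ) * Complex.I * z t) ^ n)
  convert! this using 1
  ring

lemma Good.contDiffOn (g : Good μ h z) (m : ℕ) : ∀ n, ContDiffOn ℝ m (FF μ h z n) (Set.Ioi (-1)) := by
  induction m with
  | zero =>
    intro n
    simp only [Nat.cast_zero, contDiffOn_zero]
    exact fun x hx => (g.hasDerivAt n hx).continuousAt.continuousWithinAt
  | succ m ih =>
    intro n
    push_cast
    rw [contDiffOn_succ_iff_deriv_of_isOpen isOpen_Ioi]
    refine ⟨fun x hx => (g.hasDerivAt n hx).differentiableAt.differentiableWithinAt, by simp, ?_⟩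
    exact (ih (n+1)).congr fun x hx => (g.hasDerivAt n hx).deriv

lemma Good.iterDeriv (g : Good μ h z) (n : ℕ) : ∀ ρ : ℝ, -1 < ρ →
    iteratedDeriv n (FF μ h z 0) ρ = FF μ h z n ρ := by
  induction n with
  | zero => simp
  | succ n ih =>
    intro ρ hρ
    rw [iteratedDeriv_succ]
    have : iteratedDeriv n (FF μ h z 0) =ᶠ[𝓝 ρ] FF μ h z n := by
      filter_upwards [Ioi_mem_nhds hρ] with x hx using ih x hx
    rw [this.deriv_eq, (g.hasDerivAt n hρ).deriv]

lemma Good.decay (g : Good μ h z) (k n : ℕ) : ∃ C, ∀ ρ : ℝ, 0 < ρ →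
    ρ ^ k * ‖FF μ h z n ρ‖ ≤ C := by
  refine ⟨∫ t, ((k.factorial : ℝ) * Real.pi ^ n / Real.pi ^ k) * (‖h t‖ * ‖z t‖ ^ n * ((z t).im⁻¹) ^ k *
    Real.exp (Real.pi * (z t).im)) ∂μ, fun ρ hρ => ?_⟩
  have : ρ ^ k * ‖FF μ h z n ρ‖ = ‖∫ t, ((ρ:ℂ) ^ k) * (h t * ((Real.pi : ℂ) * Complex.I * z t) ^ n *
    Complex.exp ((Real.pi : ℂ) * Complex.I * ρ * z t)) ∂μ‖ := by
    rw [integral_const_mul, norm_mul, FF]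
    simp [abs_of_pos hρ]
  rw [this]
  refine norm_integral_le_of_norm_le ((g.int n k).const_mul _) ?_
  filter_upwards [g.pos] with t ht
  rw [norm_mul, norm_mul, norm_mul, norm_pow, norm_pow, norm_pii, norm_cexp]
  simp only [Complex.norm_real, Real.norm_of_nonneg hρ.le, mul_pow]
  set y := (z t).im
  have hpi := Real.pi_pos
  have h1 : ρ ^ k * Real.exp (-(Real.pi * ρ * y)) ≤ k.factorial / Real.pi ^ k * (y⁻¹)^k := by
    have := Real.pow_div_factorial_le_exp (Real.pi * ρ * y) (by positivity) k
    rw [Real.exp_neg, inv_pow, mul_inv_le_iff₀ (Real.exp_pos _)]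
    rw [div_le_iff₀ (by positivity)] at this
    calc ρ ^ k = (Real.pi * ρ * y) ^ k / (Real.pi ^ k * y ^ k) := by
          rw [mul_pow, mul_pow]; field_simp
      _ ≤ (Real.exp (Real.pi * ρ * y) * k.factorial) / (Real.pi ^ k * y ^ k) := by gcongr
      _ = _ := by field_simp
  have h2 : 1 ≤ Real.exp (Real.pi * y) := Real.one_le_exp (by positivity)
  calc _ = (‖h t‖ * Real.pi ^ n * ‖z t‖ ^ n) * (ρ ^ k * Real.exp (-(Real.pi * ρ * y))) * 1 := by ring
    _ ≤ (‖h t‖ * Real.pi ^ n * ‖z t‖ ^ n) * (k.factorial / Real.pi ^ k * (y⁻¹)^k) *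
        Real.exp (Real.pi * y) := by gcongr
    _ = _ := by ring

lemma Good.schwartz1 (g : Good μ h z) : ∃ G : SchwartzMap ℝ ℂ, ∀ ρ : ℝ, 0 ≤ ρ →
    G ρ = FF μ h z 0 ρ := by
  set χ : ℝ → ℝ := fun ρ => Real.smoothTransition (2 * ρ + 1)
  set f : ℝ → ℂ := fun ρ => (χ ρ : ℂ) * FF μ h z 0 ρ
  have hχ : ContDiff ℝ (⊤ : ℕ∞) χ := Real.smoothTransition.contDiff.comp (by fun_prop)
  have hχ0 : ∀ ρ, ρ ≤ -1/2 → χ ρ = 0 := fun ρ h =>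
    Real.smoothTransition.zero_of_nonpos (by linarith)
  have hχ1 : ∀ ρ, 0 ≤ ρ → χ ρ = 1 := fun ρ h =>
    Real.smoothTransition.one_of_one_le (by linarith)
  have hzero : ∀ ρ < -1/2, f =ᶠ[𝓝 ρ] fun _ => 0 := by
    intro ρ hρ
    filter_upwards [Iio_mem_nhds hρ] with x hx
    simp [f, hχ0 x (le_of_lt hx)]
  have hone : ∀ ρ, 0 < ρ → f =ᶠ[𝓝 ρ] FF μ h z 0 := by
    intro ρ hρ
    filter_upwards [Ioi_mem_nhds hρ] with x hx
    simp [f, hχ1 x (le_of_lt hx)]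
  have hf : ContDiff ℝ (⊤ : ℕ∞) f := by
    rw [contDiff_iff_contDiffAt]
    intro ρ
    rcases lt_or_ge ρ (-1/2) with h1 | h1
    · exact contDiffAt_const.congr_of_eventuallyEq (hzero ρ h1)
    · have hF : ContDiffOn ℝ (⊤ : ℕ∞) (FF μ h z 0) (Set.Ioi (-1)) :=
        contDiffOn_infty.2 fun m => g.contDiffOn m 0
      refine ContDiffAt.mul ?_ (hF.contDiffAt (Ioi_mem_nhds (by linarith)))
      exact Complex.ofRealCLM.contDiff.contDiffAt.comp ρ hχ.contDiffAt
  refine ⟨⟨f, hf, fun k n => ?_⟩, fun ρ hρ => ?_⟩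
  · obtain ⟨C, hC⟩ := g.decay k n
    have hcont : Continuous (fun ρ : ℝ => ‖ρ‖ ^ k * ‖iteratedFDeriv ℝ n f ρ‖) := by
      have := hf.continuous_iteratedFDeriv (m := n) (by exact_mod_cast le_top)
      fun_prop
    obtain ⟨M, hM⟩ := (isCompact_Icc (a := (-1:ℝ)) (b := 0)).exists_bound_of_continuousOn
      hcont.continuousOn
    refine ⟨max (max C M) 0, fun ρ => ?_⟩
    rcases lt_or_ge ρ (-1) with h1 | h1
    · refine le_trans (le_of_eq ?_) (le_max_right _ _)
      rw [(hzero ρ (by linarith)).iteratedFDeriv ℝ n |>.eq_of_nhds]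
      simp only [mul_eq_zero, norm_eq_zero]
      right
      exact congrFun iteratedFDeriv_fun_zero ρ
    rcases lt_or_ge 0 ρ with h2 | h2
    · refine le_trans ?_ ((le_max_left C M).trans (le_max_left _ _))
      rw [(hone ρ h2).iteratedFDeriv ℝ n |>.eq_of_nhds, norm_iteratedFDeriv_eq_norm_iteratedDeriv,
        g.iterDeriv n ρ (by linarith), Real.norm_of_nonneg h2.le]
      exact hC ρ h2
    · refine le_trans ?_ ((le_max_right C M).trans (le_max_left _ _))
      exact (le_abs_self _).trans (hM ρ ⟨h1, h2⟩)
  · change f ρ = _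
    simp [f, hχ1 ρ hρ]

noncomputable def TT (μ : Measure ℝ) (h z : ℝ → ℂ) (x : EuclideanSpace ℝ (Fin 8)) : ℂ :=
  ∫ t, h t * Complex.exp ((Real.pi : ℂ) * Complex.I * ((‖x‖:ℂ)^2) * z t) ∂μ

lemma Good.schwartz (g : Good μ h z) : ∃ S : SchwartzMap (EuclideanSpace ℝ (Fin 8)) ℂ,
    ∀ x, S x = TT μ h z x := by
  obtain ⟨G, hG⟩ := g.schwartz1
  refine ⟨SchwartzMap.compCLM (𝕜 := ℝ) (g := fun x : EuclideanSpace ℝ (Fin 8) => ‖x‖ ^ 2)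
    (Function.hasTemperateGrowth_norm_sq _) ⟨1, 1, fun x => ?_⟩ G, fun x => ?_⟩
  · simp only [norm_pow, norm_norm, pow_one, one_mul]
    nlinarith [sq_nonneg (‖x‖ - 1), sq_nonneg ‖x‖]
  · rw [SchwartzMap.compCLM_apply]
    change G (‖x‖^2) = _
    rw [hG _ (by positivity), FF, TT]
    simp

lemma re_b {w : ℂ} (hw : 0 < w.im) : 0 < (-((Real.pi : ℂ) * Complex.I * w)).re := by
  simp; exact mul_pos Real.pi_pos hw

lemma cexp_b (r : ℝ) (w : ℂ) : Complex.exp ((Real.pi : ℂ) * Complex.I * ((r:ℂ)^2) * w) =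
    Complex.exp (-(-((Real.pi : ℂ) * Complex.I * w)) * (r:ℂ)^2) := by
  congr 1; ring

lemma fourier_gauss {w : ℂ} (hw : 0 < w.im) (y : EuclideanSpace ℝ (Fin 8)) :
    𝓕 (fun x : EuclideanSpace ℝ (Fin 8) =>
      Complex.exp ((Real.pi : ℂ) * Complex.I * ((‖x‖:ℂ)^2) * w)) y =
    (w^4)⁻¹ * Complex.exp ((Real.pi : ℂ) * Complex.I * ((‖y‖:ℂ)^2) * (-1/w)) := by
  have hw0 : w ≠ 0 := fun h => by simp [h] at hw
  simp_rw [cexp_b _ w]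
  rw [fourier_gaussian_innerProductSpace (re_b hw)]
  have hpi : (Real.pi : ℂ) ≠ 0 := by exact_mod_cast Real.pi_ne_zero
  have e : ((Module.finrank ℝ (EuclideanSpace ℝ (Fin 8)) : ℂ) / 2) = ((4:ℕ):ℂ) := by
    simp; norm_num
  rw [e, Complex.cpow_natCast]
  congr 1
  · rw [div_neg, mul_assoc, div_mul_cancel_left₀ hpi]
    simp [mul_pow]
  · congr 1
    have hI := Complex.I_ne_zero
    field_simp
    rw [Complex.I_sq]; ring

lemma Good.fourier [SFinite μ] (g : Good μ h z) (y : EuclideanSpace ℝ (Fin 8)) :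
    𝓕 (TT μ h z) y = ∫ t, h t * (((z t)^4)⁻¹ *
      Complex.exp ((Real.pi : ℂ) * Complex.I * ((‖y‖:ℂ)^2) * (-1/z t))) ∂μ := by
  have hz := g.zc
  rw [Real.fourier_eq']
  simp only [TT, ← integral_const_mul, smul_eq_mul]
  rw [integral_integral_swap]
  · refine integral_congr_ae ?_
    filter_upwards [g.pos] with t ht
    rw [← fourier_gauss ht, Real.fourier_eq', ← integral_const_mul]
    simp only [smul_eq_mul]
    congr 1; ext v; ring
  · have hmeas : AEStronglyMeasurable (Function.uncurry fun (v : EuclideanSpace ℝ (Fin 8)) (t : ℝ) =>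
        Complex.exp ((↑(-2 * Real.pi * inner ℝ v y) : ℂ) * Complex.I) *
        (h t * Complex.exp ((Real.pi : ℂ) * Complex.I * ((‖v‖:ℂ)^2) * z t)))
        ((volume : Measure (EuclideanSpace ℝ (Fin 8))).prod μ) := by
      refine AEStronglyMeasurable.mul ?_ (AEStronglyMeasurable.mul ?_ ?_)
      · exact Continuous.aestronglyMeasurable (by fun_prop)
      · exact g.hm.comp_snd
      · exact Continuous.aestronglyMeasurable (by fun_prop)
    have hn : ∀ (t : ℝ) (v : EuclideanSpace ℝ (Fin 8)),
        ‖Complex.exp ((↑(-2 * Real.pi * inner ℝ v y) : ℂ) * Complex.I) *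
        (h t * Complex.exp ((Real.pi : ℂ) * Complex.I * ((‖v‖:ℂ)^2) * z t))‖ =
        ‖h t‖ * Real.exp (-(Real.pi * (z t).im) * ‖v‖ ^ 2) := by
      intro t v
      rw [norm_mul, Complex.norm_exp_ofReal_mul_I, one_mul, norm_mul]
      have := norm_cexp (‖v‖^2) (z t)
      push_cast at this
      rw [this]
      congr 2; ring
    rw [integrable_prod_iff' hmeas]
    constructor
    · filter_upwards [g.pos] with t ht
      have h1 := (GaussianFourier.integrable_cexp_neg_mul_sq_norm_add
        (V := EuclideanSpace ℝ (Fin 8)) (re_b ht) 0 0).norm.const_mul ‖h t‖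
      refine h1.mono' ?_ (Eventually.of_forall fun v => ?_)
      · simp only [Function.uncurry]
        exact Continuous.aestronglyMeasurable (by fun_prop)
      · simp only [Function.uncurry]
        rw [hn, Complex.norm_exp]
        simp [← Complex.ofReal_pow]
    · simp only [Function.uncurry, hn]
      refine ((g.int 0 4)).mono' ?_ ?_
      · simp only [integral_const_mul]
        refine g.hm.norm.mul ?_
        refine StronglyMeasurable.aestronglyMeasurable ?_
        refine StronglyMeasurable.integral_prod_right (f := fun t (v : EuclideanSpace ℝ (Fin 8)) =>
          Real.exp (-(Real.pi * (z t).im) * ‖v‖ ^ 2)) ?_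
        exact Continuous.stronglyMeasurable (by simp only [Function.uncurry_def]; fun_prop)
      · filter_upwards [g.pos] with t ht
        rw [integral_const_mul, GaussianFourier.integral_rexp_neg_mul_sq_norm (mul_pos Real.pi_pos ht)]
        have e : ((Module.finrank ℝ (EuclideanSpace ℝ (Fin 8)) : ℝ) / 2) = ((4:ℕ):ℝ) := by
          simp; norm_num
        rw [e, Real.rpow_natCast, div_mul_cancel_left₀ Real.pi_ne_zero]
        have h0 : 0 ≤ (z t).im⁻¹ := (inv_pos.2 ht).le
        rw [Real.norm_of_nonneg (by positivity), pow_zero, mul_one]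
        have h2 : 1 ≤ Real.exp (Real.pi * (z t).im) :=
          Real.one_le_exp (mul_pos Real.pi_pos ht).le
        exact le_mul_of_one_le_right (by positivity) h2

end Viaz

namespace Viaz
open Filter Topology

noncomputable def hseg (c : ℝ) (t : ℝ) : ℂ :=
  (Complex.I - c) * (phi0 (-1 / ((t:ℂ) * (Complex.I - c))) * ((t:ℂ) * (Complex.I - c)) ^ 2)
noncomputable def zseg (c : ℝ) (t : ℝ) : ℂ := c + t * (Complex.I - c)
noncomputable def hray (t : ℝ) : ℂ := Complex.I * phi0 (Complex.I * t)
noncomputable def zray (t : ℝ) : ℂ := Complex.I * t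

noncomputable abbrev μs : Measure ℝ := volume.restrict (Set.Ioo 0 1)
noncomputable abbrev μr : Measure ℝ := volume.restrict (Set.Ioi 1)

lemma im_arg (c t : ℝ) : (-1 / ((t:ℂ) * (Complex.I - c))).im = 1 / (t * (1 + c^2)) := by
  rcases eq_or_ne t 0 with rfl | ht
  · simp
  rw [div_eq_mul_inv, mul_inv, Complex.mul_im, ← Complex.ofReal_inv]
  have : (1 + c^2) ≠ 0 := by positivity
  simp [Complex.inv_im, Complex.inv_re, Complex.normSq_apply]
  field_simp
  ring

lemma hseg_bound (c : ℝ) (hc : c^2 ≤ 1) : ∃ C : ℝ, 0 ≤ C ∧ ∀ t ∈ Set.Ioo (0:ℝ) 1,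
    ‖hseg c t‖ ≤ C * Real.exp (-(Real.pi * t⁻¹)) := by
  obtain ⟨C, hC, h⟩ := phi0_decay
  refine ⟨‖(Complex.I - c : ℂ)‖ ^ 3 * C, by positivity, fun t ht => ?_⟩
  have h0 := ht.1
  have hle : t⁻¹ / 2 ≤ 1 / (t * (1 + c^2)) := by
    rw [one_div, mul_inv, div_eq_mul_inv]
    gcongr
    linarith
  have h1t : 1 ≤ t⁻¹ := (one_le_inv₀ h0).2 ht.2.le
  have h1 := h (-1 / ((t:ℂ) * (Complex.I - c))) (by rw [im_arg]; linarith)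
  rw [im_arg] at h1
  have h2 : Real.exp (-2 * Real.pi * (1 / (t * (1 + c^2)))) ≤ Real.exp (-(Real.pi * t⁻¹)) := by
    gcongr
    have := Real.pi_pos
    nlinarith
  rw [hseg, norm_mul, norm_mul, norm_pow, norm_mul, Complex.norm_real, Real.norm_of_nonneg h0.le]
  calc _ ≤ ‖(Complex.I - c : ℂ)‖ * ((C * Real.exp (-(Real.pi * t⁻¹))) *
        (1 * ‖(Complex.I - c : ℂ)‖) ^ 2) := by
        gcongr
        · exact h1.trans (by gcongr)
        · exact ht.2.le
    _ = _ := by ring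

lemma zseg_im (c t : ℝ) : (zseg c t).im = t := by simp [zseg]

lemma good_seg (c : ℝ) (hc : c^2 ≤ 1) : Good μs (hseg c) (zseg c) := by
  have hzc : Continuous (zseg c) := by unfold zseg; fun_prop
  have hne : ∀ t ∈ Set.Ioo (0:ℝ) 1, (t:ℂ) * (Complex.I - c) ≠ 0 := by
    intro t ht
    refine mul_ne_zero (by exact_mod_cast ht.1.ne') fun h => ?_
    simpa using congrArg Complex.im h
  have hm : AEStronglyMeasurable (hseg c) μs := by
    refine ContinuousOn.aestronglyMeasurable ?_ measurableSet_Ioo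
    unfold hseg
    refine continuousOn_const.mul (ContinuousOn.mul ?_ (by fun_prop))
    refine phi0_diffOn.continuousOn.comp ?_ ?_
    · exact ContinuousOn.div (by fun_prop) (by fun_prop) hne
    · intro t ht
      change 0 < (-1 / ((t:ℂ) * (Complex.I - c))).im
      rw [im_arg]
      have := ht.1
      positivity
  refine ⟨hm, hzc, ?_, fun n k => ?_⟩
  · filter_upwards [ae_restrict_mem measurableSet_Ioo] with t ht
    rw [zseg_im]; exact ht.1
  · obtain ⟨C, hC, hb⟩ := hseg_bound c hc
    refine Integrable.of_bound (C := C * (‖c‖ + ‖(Complex.I - c : ℂ)‖) ^ n * (k.factorial / Real.pi ^ k) *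
      Real.exp Real.pi) ?_ ?_
    · refine AEStronglyMeasurable.mul (AEStronglyMeasurable.mul (hm.norm.mul ?_) ?_) ?_
      · exact Continuous.aestronglyMeasurable (by fun_prop)
      · simp only [zseg_im]
        exact Measurable.aestronglyMeasurable (by fun_prop)
      · simp only [zseg_im]
        exact Continuous.aestronglyMeasurable (by fun_prop)
    · filter_upwards [ae_restrict_mem measurableSet_Ioo] with t ht
      have h0 := ht.1
      have hpi := Real.pi_pos
      rw [zseg_im, Real.norm_of_nonneg (by positivity)]
      have h1 : ‖zseg c t‖ ≤ ‖c‖ + ‖(Complex.I - c : ℂ)‖ := by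
        refine (norm_add_le _ _).trans ?_
        rw [norm_mul, Complex.norm_real, Complex.norm_real, Real.norm_of_nonneg h0.le]
        gcongr
        exact mul_le_of_le_one_left (norm_nonneg _) ht.2.le
      have h2 : Real.exp (-(Real.pi * t⁻¹)) * (t⁻¹) ^ k ≤ k.factorial / Real.pi ^ k := by
        have := Real.pow_div_factorial_le_exp (Real.pi * t⁻¹) (by positivity) k
        rw [div_le_iff₀ (by positivity), mul_pow] at this
        rw [Real.exp_neg, inv_mul_le_iff₀ (Real.exp_pos _), ← mul_div_assoc, le_div_iff₀ (by positivity)]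
        linarith
      have h3 : Real.exp (Real.pi * t) ≤ Real.exp Real.pi := by
        gcongr
        exact mul_le_of_le_one_right hpi.le ht.2.le
      calc _ ≤ (C * Real.exp (-(Real.pi * t⁻¹))) * (‖c‖ + ‖(Complex.I - c : ℂ)‖) ^ n * (t⁻¹) ^ k *
            Real.exp Real.pi := by
            gcongr
            exact hb t ht
        _ = C * (‖c‖ + ‖(Complex.I - c : ℂ)‖) ^ n * (Real.exp (-(Real.pi * t⁻¹)) * (t⁻¹) ^ k) *
            Real.exp Real.pi := by ring
        _ ≤ _ := by gcongr

lemma good_ray : Good μr hray zray := by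
  have hzc : Continuous zray := by unfold zray; fun_prop
  have him : ∀ t, (zray t).im = t := fun t => by simp [zray]
  have hm : AEStronglyMeasurable hray μr := by
    refine ContinuousOn.aestronglyMeasurable ?_ measurableSet_Ioi
    unfold hray
    refine continuousOn_const.mul ?_
    refine phi0_diffOn.continuousOn.comp (by fun_prop) ?_
    intro t ht
    change 0 < (Complex.I * t).im
    simp only [Set.mem_Ioi] at ht
    simp; linarith
  refine ⟨hm, hzc, ?_, fun n k => ?_⟩
  · filter_upwards [ae_restrict_mem measurableSet_Ioi] with t ht
    rw [him]; exact lt_trans one_pos ht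
  · obtain ⟨C, hC, hb⟩ := phi0_decay
    have hint : Integrable (fun t : ℝ => C * n.factorial * Real.exp (-1 * t)) μr :=
      Integrable.const_mul (exp_neg_integrableOn_Ioi 1 one_pos) _
    refine hint.mono' ?_ ?_
    · refine AEStronglyMeasurable.mul (AEStronglyMeasurable.mul (hm.norm.mul ?_) ?_) ?_
      · exact Continuous.aestronglyMeasurable (by fun_prop)
      · simp only [him]
        exact Measurable.aestronglyMeasurable (by fun_prop)
      · simp only [him]
        exact Continuous.aestronglyMeasurable (by fun_prop)
    · filter_upwards [ae_restrict_mem measurableSet_Ioi] with t ht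
      simp only [Set.mem_Ioi] at ht
      have h0 : 0 < t := by linarith
      have h1 := hb (Complex.I * t) (by simp; linarith)
      have e1 : (Complex.I * (t:ℂ)).im = t := by simp
      rw [e1] at h1
      rw [him, Real.norm_of_nonneg (by positivity)]
      have e2 : ‖zray t‖ = t := by simp [zray, abs_of_pos h0]
      have e3 : ‖hray t‖ = ‖phi0 (Complex.I * t)‖ := by simp [hray]
      rw [e2, e3]
      have h2 : t ^ n ≤ Real.exp t * n.factorial := by
        have := Real.pow_div_factorial_le_exp t h0.le n
        rwa [div_le_iff₀ (by positivity)] at this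
      have h3 : (t⁻¹) ^ k ≤ 1 := pow_le_one₀ (by positivity) (inv_le_one_of_one_le₀ ht.le)
      calc _ ≤ (C * Real.exp (-2 * Real.pi * t)) * (Real.exp t * n.factorial) * 1 *
            Real.exp (Real.pi * t) := by gcongr
        _ = C * n.factorial * Real.exp (-2 * Real.pi * t + t + Real.pi * t) := by
            rw [Real.exp_add, Real.exp_add]; ring
        _ ≤ _ := by
            gcongr
            nlinarith [Real.pi_gt_three]

lemma aFn_eq (x : EuclideanSpace ℝ (Fin 8)) : aFn x = TT μs (hseg (-1)) (zseg (-1)) x +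
    TT μs (hseg 1) (zseg 1) x - 2 * TT μs (hseg 0) (zseg 0) x + 2 * TT μr hray zray x := by
  rw [aFn, aRad]
  simp only [segInt, rayIntFrom, TT, intervalIntegral.integral_of_le zero_le_one,
    integral_Ioc_eq_integral_Ioo, ← integral_const_mul]
  congr 1
  · congr 1
    · congr 1
      · congr 1; ext t
        simp only [hseg, zseg]; push_cast
        rw [show (-1 + (t:ℂ) * (Complex.I - -1) + 1) = t * (Complex.I - -1) by ring]
        ring
      · congr 1; ext t
        simp only [hseg, zseg]; push_cast
        rw [show (1 + (t:ℂ) * (Complex.I - 1) - 1) = t * (Complex.I - 1) by ring]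
        ring
    · congr 1; ext t
      simp only [hseg, zseg]; push_cast
      rw [show (0 + (t:ℂ) * (Complex.I - 0)) = t * (Complex.I - 0) by ring]
      ring
  · congr 1; ext t
    simp only [hray, zray]
    ring

/-- change of variables `t = 1/s` -/
lemma cov (F : ℝ → ℂ) : ∫ t in Set.Ioo (0:ℝ) 1, F t = ∫ s in Set.Ioi (1:ℝ), ((s:ℂ)^2)⁻¹ * F s⁻¹ := by
  have himg : (fun s : ℝ => s⁻¹) '' Set.Ioi 1 = Set.Ioo 0 1 := by
    ext t
    simp only [Set.mem_image, Set.mem_Ioi, Set.mem_Ioo]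
    constructor
    · rintro ⟨s, hs, rfl⟩
      exact ⟨inv_pos.2 (by linarith), inv_lt_one_of_one_lt₀ hs⟩
    · rintro ⟨h0, h1⟩
      exact ⟨t⁻¹, (one_lt_inv₀ h0).2 h1, inv_inv t⟩
  rw [← himg, integral_image_eq_integral_abs_deriv_smul (f' := fun s => -(s^2)⁻¹) measurableSet_Ioi]
  · refine setIntegral_congr_fun measurableSet_Ioi fun s hs => ?_
    simp only [abs_neg, abs_inv, abs_pow, sq_abs, Complex.real_smul]
    push_cast; rfl
  · intro s hs
    exact (hasDerivAt_inv (by simp at hs; linarith)).hasDerivWithinAt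
  · exact inv_injective.injOn

lemma fourier_seg0 (y : EuclideanSpace ℝ (Fin 8)) :
    𝓕 (TT μs (hseg 0) (zseg 0)) y = - TT μr hray zray y := by
  rw [(good_seg 0 (by norm_num)).fourier, cov, TT, ← integral_neg]
  refine setIntegral_congr_fun measurableSet_Ioi fun s hs => ?_
  simp only [Set.mem_Ioi] at hs
  have hs0 : (s:ℂ) ≠ 0 := by exact_mod_cast (by linarith : s ≠ 0)
  have hI := Complex.I_ne_zero
  simp only [hseg, zseg, hray, zray]
  push_cast
  have e : (-1 / ((s:ℂ)⁻¹ * Complex.I)) = Complex.I * s := by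
    field_simp; rw [Complex.I_sq]
  rw [sub_zero, zero_add, e]
  field_simp
  simp only [Complex.I_sq, show Complex.I ^ 3 = -Complex.I by rw [pow_succ, Complex.I_sq]; ring]
  ring

end Viaz

namespace Viaz
open Filter Topology

lemma mem_bigball {u : ℂ} {K : ℝ} (h : 1/2 ≤ u.im) (hK : ‖u‖ ≤ K) :
    u ∈ Metric.ball (Complex.I * ((K^2+1 : ℝ) : ℂ)) (K^2+1) := by
  have hK0 : 0 ≤ K := (norm_nonneg u).trans hK
  rw [mem_ball_iff_norm]
  refine lt_of_pow_lt_pow_left₀ 2 (by positivity) ?_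
  rw [← Complex.normSq_eq_norm_sq]
  have h2 : ‖u‖^2 ≤ K^2 := by gcongr
  rw [← Complex.normSq_eq_norm_sq] at h2
  rw [Complex.normSq_apply] at *
  simp only [Complex.sub_re, Complex.sub_im, Complex.mul_re, Complex.mul_im, Complex.I_re,
    Complex.I_im, Complex.ofReal_re, Complex.ofReal_im]
  nlinarith [sq_nonneg K]

lemma ball_sub {u : ℂ} {R : ℝ} (h : u ∈ Metric.ball (Complex.I * (R : ℂ)) R) : 0 < u.im := by
  rw [mem_ball_iff_norm] at h
  have := (Complex.abs_im_le_norm (u - Complex.I * (R:ℂ))).trans_lt h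
  simp at this
  have := (abs_lt.1 this).1
  linarith

lemma line_im {p d : ℂ} (hp : p.im = 1/2) (hd : d.im = 1/2) (s : ℝ) :
    (p + ((s:ℂ)-1)*d).im = s/2 := by
  simp [hp, hd]; ring

lemma line_norm {p d : ℂ} {K s N : ℝ} (hs : 1 ≤ s) (hN : s ≤ N) (hK : ‖p‖ + N * ‖d‖ ≤ K) :
    ‖p + ((s:ℂ)-1)*d‖ ≤ K := by
  refine (norm_add_le _ _).trans (le_trans ?_ hK)
  rw [norm_mul, ← Complex.ofReal_one, ← Complex.ofReal_sub, Complex.norm_real,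
    Real.norm_of_nonneg (by linarith)]
  gcongr
  linarith

lemma contour_fin {G : ℂ → ℂ} (hG : DifferentiableOn ℂ G {z | 0 < z.im}) {M : ℝ} (hM0 : 0 ≤ M)
    (hM : ∀ u : ℂ, 1/2 ≤ u.im → ‖G u‖ ≤ M * Real.exp (-2 * Real.pi * u.im))
    {p d1 d2 : ℂ} (hp : p.im = 1/2) (h1 : d1.im = 1/2) (h2 : d2.im = 1/2) {N : ℝ} (hN : 1 ≤ N) :
    ‖(∫ s in (1:ℝ)..N, G (p + ((s:ℂ)-1)*d1) * d1) - ∫ s in (1:ℝ)..N, G (p + ((s:ℂ)-1)*d2) * d2‖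
      ≤ M * Real.exp (- Real.pi * N) * (N * ‖d1 - d2‖) := by
  set K : ℝ := ‖p‖ + N * ‖d1‖ + N * ‖d2‖ with hK
  have hk1 : ‖p‖ + N * ‖d1‖ ≤ K := by have : 0 ≤ N * ‖d2‖ := by positivity
                                      linarith
  have hk2 : ‖p‖ + N * ‖d2‖ ≤ K := by have : 0 ≤ N * ‖d1‖ := by positivity
                                      linarith
  set B := Metric.ball (Complex.I * ((K^2+1 : ℝ) : ℂ)) (K^2+1) with hB
  have hsub : B ⊆ {z | 0 < z.im} := fun u hu => ball_sub hu
  obtain ⟨P, hP⟩ := (hG.mono hsub).isExactOn_ball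
  have ftc : ∀ d : ℂ, d.im = 1/2 → ‖p‖ + N * ‖d‖ ≤ K →
      ∫ s in (1:ℝ)..N, G (p + ((s:ℂ)-1)*d) * d = P (p + ((N:ℂ)-1)*d) - P p := by
    intro d hd hk
    have hmem : ∀ s ∈ Set.uIcc 1 N, p + ((s:ℂ)-1)*d ∈ B := by
      intro s hs
      rw [Set.uIcc_of_le hN] at hs
      refine mem_bigball ?_ (line_norm hs.1 hs.2 hk)
      rw [line_im hp hd]; linarith [hs.1]
    rw [intervalIntegral.integral_eq_sub_of_hasDerivAt (f := fun s : ℝ => P (p + ((s:ℂ)-1)*d))]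
    · simp
    · intro s hs
      have hl : HasDerivAt (fun s : ℝ => p + ((s:ℂ)-1)*d) d s := by
        simpa using (((hasDerivAt_id s).ofReal_comp.sub_const (1:ℂ)).mul_const d).const_add p
      exact (hP _ (hmem s hs)).comp s hl
    · apply ContinuousOn.intervalIntegrable
      refine ContinuousOn.mul ?_ continuousOn_const
      refine hG.continuousOn.comp (by fun_prop) fun s hs => hsub (hmem s hs)
  rw [ftc d1 h1 hk1, ftc d2 h2 hk2, sub_sub_sub_cancel_right]
  have hcv : Convex ℝ (B ∩ {u : ℂ | N/2 ≤ u.im}) :=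
    (convex_ball _ _).inter (convex_halfSpace_im_ge _)
  have hmem : ∀ d : ℂ, d.im = 1/2 → ‖p‖ + N * ‖d‖ ≤ K →
      p + ((N:ℂ)-1)*d ∈ B ∩ {u : ℂ | N/2 ≤ u.im} := by
    intro d hd hk
    refine ⟨mem_bigball ?_ (line_norm hN le_rfl hk), ?_⟩
    · rw [line_im hp hd]; linarith
    · simp only [Set.mem_ofPred_eq]; rw [line_im hp hd]
  have := hcv.norm_image_sub_le_of_norm_hasDerivWithin_le (f := P) (f' := G)
    (C := M * Real.exp (- Real.pi * N)) (fun x hx => (hP x hx.1).hasDerivWithinAt) (fun x hx => ?_)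
    (hmem d2 h2 hk2) (hmem d1 h1 hk1)
  · refine this.trans ?_
    gcongr
    rw [show p + ((N:ℂ)-1)*d1 - (p + ((N:ℂ)-1)*d2) = ((N-1:ℝ):ℂ) * (d1-d2) by push_cast; ring,
      norm_mul, Complex.norm_real, Real.norm_of_nonneg (by linarith)]
    gcongr; linarith
  · have hx2 : N/2 ≤ x.im := hx.2
    refine (hM x (by linarith)).trans ?_
    refine mul_le_mul_of_nonneg_left (Real.exp_le_exp.2 ?_) hM0
    nlinarith [Real.pi_pos]

lemma contour_int {G : ℂ → ℂ} (hG : DifferentiableOn ℂ G {z | 0 < z.im}) {M : ℝ}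
    (hM : ∀ u : ℂ, 1/2 ≤ u.im → ‖G u‖ ≤ M * Real.exp (-2 * Real.pi * u.im))
    {p d : ℂ} (hp : p.im = 1/2) (h : d.im = 1/2) :
    IntegrableOn (fun s : ℝ => G (p + ((s:ℂ)-1)*d) * d) (Set.Ioi 1) := by
  have hi : IntegrableOn (fun s : ℝ => M * Real.exp (- Real.pi * s) * ‖d‖) (Set.Ioi 1) :=
    ((exp_neg_integrableOn_Ioi 1 Real.pi_pos).const_mul M).mul_const _
  refine Integrable.mono' hi ?_ ?_
  · refine ContinuousOn.aestronglyMeasurable ?_ measurableSet_Ioi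
    refine ContinuousOn.mul ?_ continuousOn_const
    refine hG.continuousOn.comp (by fun_prop) fun s hs => ?_
    simp only [Set.mem_ofPred_eq, Set.mem_Ioi] at *
    rw [line_im hp h]; linarith
  · filter_upwards [ae_restrict_mem measurableSet_Ioi] with s hs
    simp only [Set.mem_Ioi] at hs
    rw [norm_mul]
    gcongr
    refine (hM _ (by rw [line_im hp h]; linarith)).trans_eq ?_
    rw [line_im hp h]; ring_nf

lemma contour {G : ℂ → ℂ} (hG : DifferentiableOn ℂ G {z | 0 < z.im}) {M : ℝ} (hM0 : 0 ≤ M)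
    (hM : ∀ u : ℂ, 1/2 ≤ u.im → ‖G u‖ ≤ M * Real.exp (-2 * Real.pi * u.im))
    {p d1 d2 : ℂ} (hp : p.im = 1/2) (h1 : d1.im = 1/2) (h2 : d2.im = 1/2) :
    ∫ s in Set.Ioi (1:ℝ), G (p + ((s:ℂ)-1)*d1) * d1 =
    ∫ s in Set.Ioi (1:ℝ), G (p + ((s:ℂ)-1)*d2) * d2 := by
  have t1 := intervalIntegral_tendsto_integral_Ioi 1 (contour_int hG hM hp h1) tendsto_id
  have t2 := intervalIntegral_tendsto_integral_Ioi 1 (contour_int hG hM hp h2) tendsto_id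
  have t3 := t1.sub t2
  have t4 : Tendsto (fun N : ℝ => M * Real.exp (- Real.pi * N) * (N * ‖d1 - d2‖)) atTop (𝓝 0) := by
    have := (Real.tendsto_pow_mul_exp_neg_atTop_nhds_zero 1).comp
      (tendsto_id.const_mul_atTop Real.pi_pos)
    have := this.const_mul (M * ‖d1-d2‖ / Real.pi)
    rw [mul_zero] at this
    refine this.congr fun N => ?_
    have := Real.pi_ne_zero
    simp only [Function.comp, id, pow_one, neg_mul]
    field_simp
  have t5 := squeeze_zero_norm' (by
    filter_upwards [eventually_ge_atTop 1] with N hN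
    exact contour_fin hG hM0 hM hp h1 h2 hN) t4
  exact sub_eq_zero.1 (tendsto_nhds_unique t3 t5)

end Viaz

namespace Viaz
open Filter Topology

noncomputable def GG (r : ℝ) (u : ℂ) : ℂ :=
  phi0 u * ((u^4)⁻¹ * Complex.exp ((Real.pi:ℂ) * Complex.I * (r:ℂ)^2 * (1 - 1/u)))

lemma GG_diff (r : ℝ) : DifferentiableOn ℂ (GG r) {z | 0 < z.im} := by
  intro u hu
  have hu0 : u ≠ 0 := by rintro rfl; simp at hu
  have h4 : u^4 ≠ 0 := pow_ne_zero _ hu0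
  refine (phi0_diffOn u hu).mul (DifferentiableAt.differentiableWithinAt ?_)
  fun_prop (disch := assumption)

lemma GG_bound (r : ℝ) : ∃ M, 0 ≤ M ∧ ∀ u : ℂ, 1/2 ≤ u.im →
    ‖GG r u‖ ≤ M * Real.exp (-2 * Real.pi * u.im) := by
  obtain ⟨C, hC, hb⟩ := phi0_decay
  refine ⟨C * 16, by positivity, fun u hu => ?_⟩
  have h1 : (1/2 : ℝ) ≤ ‖u‖ := hu.trans ((le_abs_self _).trans (Complex.abs_im_le_norm u))
  have h2 : ‖(u^4)⁻¹‖ ≤ 16 := by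
    rw [norm_inv, norm_pow, show (16:ℝ) = ((1/2)^4)⁻¹ by norm_num]
    gcongr
  have h3 : ‖Complex.exp ((Real.pi:ℂ) * Complex.I * (r:ℂ)^2 * (1 - 1/u))‖ ≤ 1 := by
    rw [← Complex.ofReal_pow, norm_cexp, Real.exp_le_one_iff, neg_nonpos]
    have : 0 ≤ (1 - 1/u).im := by
      simp only [one_div, Complex.sub_im, Complex.one_im, Complex.inv_im]
      rw [zero_sub, neg_div, neg_neg]
      exact div_nonneg (by linarith) (Complex.normSq_nonneg _)
    have := Real.pi_pos
    positivity
  rw [GG, norm_mul, norm_mul]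
  calc _ ≤ (C * Real.exp (-2 * Real.pi * u.im)) * (16 * 1) := by
        gcongr
        exact hb u hu
    _ = _ := by ring

lemma one_add_I_ne : (1 + Complex.I) ≠ 0 := by
  intro h; have := congrArg Complex.re h; simp at this

lemma I_sub_one_ne : (Complex.I - 1) ≠ 0 := by
  intro h; have := congrArg Complex.im h; simp at this

lemma fourier_segm (y : EuclideanSpace ℝ (Fin 8)) :
    𝓕 (TT μs (hseg (-1)) (zseg (-1))) y = TT μs (hseg 1) (zseg 1) y := by
  obtain ⟨M, hM0, hM⟩ := GG_bound ‖y‖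
  have key := contour (GG_diff ‖y‖) hM0 hM (p := (1 + Complex.I)/2) (d1 := (-1 + Complex.I)/2)
    (d2 := (1 + Complex.I)/2) (by simp) (by simp) (by simp)
  have hI := Complex.I_sq
  rw [(good_seg (-1) (by norm_num)).fourier, cov, TT, cov, ← neg_inj, ← integral_neg,
    ← integral_neg]
  refine Eq.trans ?_ (key.trans ?_)
  · refine setIntegral_congr_fun measurableSet_Ioi fun s hs => ?_
    simp only [Set.mem_Ioi] at hs
    have hs0 : (s:ℂ) ≠ 0 := by exact_mod_cast (by linarith : s ≠ 0)
    set u : ℂ := (1 + Complex.I)/2 + ((s:ℂ)-1)*((-1 + Complex.I)/2) with hu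
    have hu1 : u = 1 + s * ((-1 + Complex.I)/2) := by rw [hu]; ring
    have huim : u.im = s/2 := line_im (by simp) (by simp) s
    have hu0 : u ≠ 0 := by
      intro h; rw [h] at huim; simp at huim; linarith
    have hz : zseg (-1) s⁻¹ = u * ((s:ℂ)⁻¹ * (1 + Complex.I)) := by
      simp only [zseg]; push_cast; rw [hu1]; field_simp; linear_combination (-s) * hI
    have hw : -1 / ((s:ℂ)⁻¹ * (1 + Complex.I)) = u + ((-1:ℤ):ℂ) := by
      have := one_add_I_ne
      push_cast; rw [hu1]; field_simp; linear_combination (-s) * hI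
    have hh : hseg (-1) s⁻¹ = (1 + Complex.I) * (phi0 u * ((s:ℂ)⁻¹ * (1 + Complex.I))^2) := by
      simp only [hseg]
      rw [← phi0_int u (-1), ← hw]; push_cast; ring_nf
    have he : -1 / (u * ((s:ℂ)⁻¹ * (1 + Complex.I))) = 1 - 1/u := by
      rw [mul_comm, ← div_div, hw]; push_cast; field_simp; ring
    simp only [hz, hh, he, GG]
    have := one_add_I_ne
    generalize Complex.exp _ = E
    field_simp
    linear_combination (-(phi0 u * E)) * hI
  · refine setIntegral_congr_fun measurableSet_Ioi fun s hs => ?_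
    simp only [Set.mem_Ioi] at hs
    have hs0 : (s:ℂ) ≠ 0 := by exact_mod_cast (by linarith : s ≠ 0)
    set v : ℂ := (1 + Complex.I)/2 + ((s:ℂ)-1)*((1 + Complex.I)/2) with hv
    have hv1 : v = s * ((1 + Complex.I)/2) := by rw [hv]; ring
    have hw : -1 / ((s:ℂ)⁻¹ * (Complex.I - 1)) = v := by
      have := I_sub_one_ne
      rw [hv1]; field_simp; linear_combination (-1) * hI
    have hh : hseg 1 s⁻¹ = (Complex.I - 1) * (phi0 v * ((s:ℂ)⁻¹ * (Complex.I - 1))^2) := by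
      simp only [hseg]
      rw [← hw]; push_cast; ring_nf
    have hz : zseg 1 s⁻¹ = 1 - 1/v := by
      simp only [zseg]; rw [← hw]
      have := I_sub_one_ne
      push_cast; field_simp; ring
    simp only [hz, hh, GG]
    generalize Complex.exp _ = E
    generalize phi0 v = F
    rw [hv1]
    have := one_add_I_ne
    field_simp
    linear_combination (F * E * (Complex.I^4 - 4 * Complex.I^2 + 7)) * hI

lemma TT_even (μ : Measure ℝ) (h z : ℝ → ℂ) (x : EuclideanSpace ℝ (Fin 8)) :
    TT μ h z (-x) = TT μ h z x := by
  simp only [TT, norm_neg]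

lemma fourier_swap {A B : SchwartzMap (EuclideanSpace ℝ (Fin 8)) ℂ} (hA : ∀ x, A (-x) = A x)
    (h : 𝓕 A = B) : 𝓕 B = A := by
  have h1 : 𝓕⁻ B = A := by rw [← h]; exact FourierTransform.fourierInv_fourier_eq A
  ext x
  have h2 : (𝓕⁻ B) (-x) = (𝓕 B) x := by
    rw [SchwartzMap.fourierInv_coe, SchwartzMap.fourier_coe, Real.fourierInv_eq_fourier_neg,
      neg_neg]
  rw [← h2, h1, hA]

theorem main :
    (∃ S : SchwartzMap (EuclideanSpace ℝ (Fin 8)) ℂ, ∀ x, S x = aFn x) ∧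
    (∀ x : EuclideanSpace ℝ (Fin 8), 𝓕 aFn x = aFn x) := by
  obtain ⟨A, hA⟩ := (good_seg (-1) (by norm_num)).schwartz
  obtain ⟨B, hB⟩ := (good_seg 1 (by norm_num)).schwartz
  obtain ⟨D, hD⟩ := (good_seg 0 (by norm_num)).schwartz
  obtain ⟨R, hR⟩ := good_ray.schwartz
  have hS : ∀ x, (A + B - (2:ℂ) • D + (2:ℂ) • R) x = aFn x := by
    intro x
    rw [aFn_eq]
    simp [hA, hB, hD, hR]
  refine ⟨⟨_, hS⟩, fun x => ?_⟩
  have fAB : 𝓕 A = B := by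
    ext x
    rw [SchwartzMap.fourier_coe, hB, ← fourier_segm, ← funext hA]
  have fDR : 𝓕 D = -R := by
    ext x
    rw [SchwartzMap.fourier_coe, neg_apply, hR, ← fourier_seg0, ← funext hD]
  have fBA : 𝓕 B = A := fourier_swap (fun x => by rw [hA, hA, TT_even]) fAB
  have fRD : 𝓕 (-R) = D := fourier_swap (fun x => by rw [hD, hD, TT_even]) fDR
  have fRD' : 𝓕 R = -D := by
    have : 𝓕 (-R) = - 𝓕 R := map_neg (SchwartzMap.fourierTransformCLM ℂ) R
    rw [← fRD, this, neg_neg]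
  rw [← funext hS, ← SchwartzMap.fourier_coe]
  congr 1
  have hadd : ∀ f g : SchwartzMap (EuclideanSpace ℝ (Fin 8)) ℂ, 𝓕 (f + g) = 𝓕 f + 𝓕 g :=
    fun f g => map_add (SchwartzMap.fourierTransformCLM ℂ) f g
  have hsub : ∀ f g : SchwartzMap (EuclideanSpace ℝ (Fin 8)) ℂ, 𝓕 (f - g) = 𝓕 f - 𝓕 g :=
    fun f g => map_sub (SchwartzMap.fourierTransformCLM ℂ) f g
  have hsm : ∀ (c : ℂ) (f : SchwartzMap (EuclideanSpace ℝ (Fin 8)) ℂ), 𝓕 (c • f) = c • 𝓕 f :=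
    fun c f => map_smul (SchwartzMap.fourierTransformCLM ℂ) c f
  rw [hadd, hsub, hadd, hsm, hsm, fAB, fBA, fDR, fRD']
  simp only [smul_neg]
  abel

end Viaz

/-- **Proposition 1.** The function `a : ℝ⁸ → ℂ` defined by the contour integrals above is a
Schwartz function and is a `+1`-eigenfunction of the Fourier transform: `â = a`. -/
theorem aFn_schwartz_and_fourier_eigenfunction :
    (∃ S : SchwartzMap (EuclideanSpace ℝ (Fin 8)) ℂ, ∀ x, S x = aFn x) ∧
    (∀ x : EuclideanSpace ℝ (Fin 8), 𝓕 aFn x = aFn x) := Viaz.main
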